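/- Let (G_t,H_t), t ∈ ℕ, be a sequence of CSS pairs of strictly increasing block lengths n_t, such that every row of every G_t and every H_t has Hamming weight at most m (m ≥ 2), and such that the CSS distances satisfy min(d_{G_t}, d_{H_t}) ≥ D·ln(n_t) for some constant D > 0. Then for every K > 0 and 0 ≤ p ≤ 1 satisfying (m−1)·[e^{−2K}(1−p) + e^{2K}p] < e^{−1/D}, the point (p,K) is in the decodable region: lim_{t→∞} P_succ(G_t,H_t;K,p) = 1. -/

import Mathlib

open Matrix Filter

/-- Partition function `Z_e(G;K)` of the random-bond Ising model in Wegner's form. -/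
noncomputable def Zf {ρ : Type*} [Fintype ρ] [DecidableEq ρ] {n : ℕ}
    (G : Matrix ρ (Fin n) (ZMod 2)) (e : Fin n → ZMod 2) (K : ℝ) : ℝ :=
  ∑ α : ρ → ZMod 2,
    Real.exp (K * ∑ b : Fin n, (-1 : ℝ) ^ ((e b).val + ((Matrix.vecMul α G) b).val))

/-- `Hs` is an adapted dual of `H`: it stacks `G` on top of `k` extra rows, and its
row space equals `C_H^⊥ = {c | H cᵀ = 0}`. -/
def IsAdaptedDual {rG rH k n : ℕ} (G : Matrix (Fin rG) (Fin n) (ZMod 2))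
    (H : Matrix (Fin rH) (Fin n) (ZMod 2))
    (Hs : Matrix (Fin rG ⊕ Fin k) (Fin n) (ZMod 2)) : Prop :=
  (∀ i, Hs (Sum.inl i) = G i) ∧
  LinearMap.range Hs.vecMulLinear = LinearMap.ker H.mulVecLin

/-- Homological difference `ΔF_e(G,H;K) = ln Z_e(H*;K) − ln Z_e(G;K)`. -/
noncomputable def deltaF {ρ ρ' : Type*} [Fintype ρ] [DecidableEq ρ] [Fintype ρ'] [DecidableEq ρ'] {n : ℕ}
    (G : Matrix ρ (Fin n) (ZMod 2)) (Hs : Matrix ρ' (Fin n) (ZMod 2))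
    (e : Fin n → ZMod 2) (K : ℝ) : ℝ :=
  Real.log (Zf Hs e K) - Real.log (Zf G e K)

/-- Disorder average `[X_e]_p = Σ_e p^{|e|}(1−p)^{n−|e|} X_e`. -/
noncomputable def davg {n : ℕ} (p : ℝ) (X : (Fin n → ZMod 2) → ℝ) : ℝ :=
  ∑ e : Fin n → ZMod 2, p ^ hammingNorm e * (1 - p) ^ (n - hammingNorm e) * X e

/-- Average success probability of maximum-likelihood decoding. -/
noncomputable def Psucc {ρ ρ' : Type*} [Fintype ρ] [DecidableEq ρ] [Fintype ρ'] [DecidableEq ρ'] {n : ℕ}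
    (G : Matrix ρ (Fin n) (ZMod 2)) (Hs : Matrix ρ' (Fin n) (ZMod 2))
    (K p : ℝ) : ℝ :=
  davg p (fun e => Zf G e K / Zf Hs e K)

/-- CSS distance `d_G`: minimum Hamming weight of a vector `c` with `H cᵀ = 0`
that is not in the row space of `G`. -/
noncomputable def dCSS {rG rH n : ℕ} (G : Matrix (Fin rG) (Fin n) (ZMod 2))
    (H : Matrix (Fin rH) (Fin n) (ZMod 2)) : ℕ :=
  sInf {w | ∃ c : Fin n → ZMod 2,
    H.mulVec c = 0 ∧ (¬ ∃ α, Matrix.vecMul α G = c) ∧ hammingNorm c = w}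

namespace CSSAux

/-- Indicator vector of a finite set. -/
def vec {n : ℕ} (c : Finset (Fin n)) : Fin n → ZMod 2 := fun b => if b ∈ c then 1 else 0

/-- Support of a vector. -/
def sup {n : ℕ} (v : Fin n → ZMod 2) : Finset (Fin n) := Finset.univ.filter (fun b => v b ≠ 0)

lemma zmod2 (a : ZMod 2) (h : a ≠ 0) : a = 1 := by
  revert a; decide

lemma vec_sup {n : ℕ} (v : Fin n → ZMod 2) : vec (sup v) = v := by
  funext b
  by_cases h : v b = 0
  · simp [vec, sup, h]
  · simp [vec, sup, zmod2 _ h]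

lemma hamming_vec {n : ℕ} (c : Finset (Fin n)) : hammingNorm (vec c) = c.card := by
  simp [hammingNorm, vec]

/-- Nontrivial codewords. -/
def NT {rG rH n : ℕ} (G : Matrix (Fin rG) (Fin n) (ZMod 2))
    (H : Matrix (Fin rH) (Fin n) (ZMod 2)) (c : Finset (Fin n)) : Prop :=
  H.mulVec (vec c) = 0 ∧ ¬ ∃ α, Matrix.vecMul α G = vec c

open Classical in
/-- Minimal nontrivial codewords. -/
noncomputable def MM {rG rH n : ℕ} (G : Matrix (Fin rG) (Fin n) (ZMod 2))
    (H : Matrix (Fin rH) (Fin n) (ZMod 2)) : Finset (Finset (Fin n)) :=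
  Finset.univ.filter (fun c => Minimal (NT G H) c)

lemma mem_MM {rG rH n : ℕ} {G : Matrix (Fin rG) (Fin n) (ZMod 2)}
    {H : Matrix (Fin rH) (Fin n) (ZMod 2)} {c : Finset (Fin n)} :
    c ∈ MM G H ↔ Minimal (NT G H) c := by simp [MM]

lemma count {n : ℕ} (M : Finset (Finset (Fin n))) (q : ℕ)
    (h : ∀ S : Finset (Fin n), S.Nonempty → ∃ B : Finset (Fin n), B.card ≤ q ∧
      ∀ c ∈ M, S ⊂ c → ∃ b ∈ B, b ∉ S ∧ b ∈ c) (j : ℕ) :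
    ∀ S : Finset (Fin n), S.Nonempty →
      (M.filter (fun c => S ⊆ c ∧ c.card = S.card + j)).card ≤ q ^ j := by
  induction j with
  | zero =>
    intro S hS
    rw [pow_zero, Finset.card_le_one]
    intro a ha b hb
    simp only [Finset.mem_filter] at ha hb
    rw [← Finset.eq_of_subset_of_card_le ha.2.1 (by lia),
      ← Finset.eq_of_subset_of_card_le hb.2.1 (by lia)]
  | succ j ih =>
    intro S hS
    obtain ⟨B, hB, hc⟩ := h S hS
    have hsub : M.filter (fun c => S ⊆ c ∧ c.card = S.card + (j + 1)) ⊆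
        (B.filter (fun b => b ∉ S)).biUnion (fun b =>
          M.filter (fun c => insert b S ⊆ c ∧ c.card = (insert b S).card + j)) := by
      intro c hcm
      simp only [Finset.mem_filter] at hcm
      obtain ⟨hM, hSc, hcard⟩ := hcm
      have hss : S ⊂ c := by
        refine Finset.ssubset_iff_subset_ne.2 ⟨hSc, ?_⟩
        rintro rfl
        omega
      obtain ⟨b, hbB, hbS, hbc⟩ := hc c hM hss
      simp only [Finset.mem_biUnion, Finset.mem_filter]
      refine ⟨b, ⟨hbB, hbS⟩, hM, Finset.insert_subset hbc hSc, ?_⟩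
      rw [Finset.card_insert_of_notMem hbS]; omega
    calc _ ≤ _ := Finset.card_le_card hsub
      _ ≤ (B.filter (fun b => b ∉ S)).card * q ^ j :=
        Finset.card_biUnion_le_card_mul _ _ _ (fun b _ => ih _ (Finset.insert_nonempty _ _))
      _ ≤ q * q ^ j := Nat.mul_le_mul_right _ ((Finset.card_filter_le _ _).trans hB)
      _ = q ^ (j + 1) := by ring

lemma count' {n : ℕ} (M : Finset (Finset (Fin n))) (q : ℕ)
    (h : ∀ S : Finset (Fin n), S.Nonempty → ∃ B : Finset (Fin n), B.card ≤ q ∧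
      ∀ c ∈ M, S ⊂ c → ∃ b ∈ B, b ∉ S ∧ b ∈ c) (j : ℕ) :
    (M.filter (fun c => c.card = j + 1)).card ≤ n * q ^ j := by
  have hsub : M.filter (fun c => c.card = j + 1) ⊆
        (Finset.univ : Finset (Fin n)).biUnion (fun b =>
          M.filter (fun c => {b} ⊆ c ∧ c.card = ({b} : Finset (Fin n)).card + j)) := by
    intro c hcm
    simp only [Finset.mem_filter] at hcm
    obtain ⟨b, hb⟩ : c.Nonempty := by
      rw [← Finset.card_pos]; omega
    simp only [Finset.mem_biUnion, Finset.mem_filter]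
    refine ⟨b, Finset.mem_univ _, hcm.1, by simpa using hb, ?_⟩
    simp; omega
  calc _ ≤ _ := Finset.card_le_card hsub
    _ ≤ (Finset.univ : Finset (Fin n)).card * q ^ j :=
        Finset.card_biUnion_le_card_mul _ _ _
          (fun b _ => count M q h j _ (Finset.singleton_nonempty _))
    _ = _ := by simp

lemma MM_empty {rG rH n : ℕ} (G : Matrix (Fin rG) (Fin n) (ZMod 2))
    (H : Matrix (Fin rH) (Fin n) (ZMod 2)) : ∅ ∉ MM G H := by
  rw [mem_MM]
  intro h
  exact h.prop.2 ⟨0, by funext b; simp [vec]⟩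

lemma mulVec_vec {rH n : ℕ} (H : Matrix (Fin rH) (Fin n) (ZMod 2)) (c : Finset (Fin n))
    (i : Fin rH) : H.mulVec (vec c) i = ∑ b ∈ c, H i b := by
  simp [Matrix.mulVec, dotProduct, vec]

lemma MM_branch {rG rH n : ℕ} (G : Matrix (Fin rG) (Fin n) (ZMod 2))
    (H : Matrix (Fin rH) (Fin n) (ZMod 2)) (m : ℕ) (hrow : ∀ i, hammingNorm (H i) ≤ m)
    (S : Finset (Fin n)) (hS : S.Nonempty) : ∃ B : Finset (Fin n), B.card ≤ m - 1 ∧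
      ∀ c ∈ MM G H, S ⊂ c → ∃ b ∈ B, b ∉ S ∧ b ∈ c := by
  by_cases h : H.mulVec (vec S) = 0
  · refine ⟨∅, by simp, ?_⟩
    intro c hc hSc
    exfalso
    rw [mem_MM] at hc
    have hv : vec (c \ S) = vec c - vec S := by
      funext b
      by_cases hb : b ∈ S
      · simp [vec, hb, hSc.1 hb]
      · simp [vec, hb]
    have hlt : c \ S < c := Finset.sdiff_ssubset hSc.1 hS
    have h1 : ¬ NT G H S := hc.not_prop_of_lt hSc
    have h2 : ¬ NT G H (c \ S) := hc.not_prop_of_lt hlt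
    have h3 : ∃ α, Matrix.vecMul α G = vec S := by
      by_contra h4
      exact h1 ⟨h, h4⟩
    have h4 : ∃ α, Matrix.vecMul α G = vec (c \ S) := by
      by_contra h4
      refine h2 ⟨?_, h4⟩
      rw [hv, Matrix.mulVec_sub, h, hc.prop.1, sub_zero]
    obtain ⟨α, hα⟩ := h3
    obtain ⟨β, hβ⟩ := h4
    refine hc.prop.2 ⟨α + β, ?_⟩
    rw [Matrix.add_vecMul, hα, hβ, hv]
    abel
  · obtain ⟨i, hi⟩ : ∃ i, H.mulVec (vec S) i ≠ 0 := by
      by_contra hh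
      push Not at hh
      exact h (funext hh)
    rw [mulVec_vec] at hi
    obtain ⟨b0, hb0, hb0'⟩ := Finset.exists_ne_zero_of_sum_ne_zero hi
    refine ⟨sup (H i) \ S, ?_, ?_⟩
    · have h1 : sup (H i) \ S ⊆ (sup (H i)).erase b0 := by
        intro b hb
        simp only [Finset.mem_sdiff, Finset.mem_erase] at hb ⊢
        refine ⟨?_, hb.1⟩
        rintro rfl
        exact hb.2 hb0
      refine (Finset.card_le_card h1).trans ?_
      rw [Finset.card_erase_of_mem (by simp [sup, hb0'])]
      exact Nat.sub_le_sub_right (hrow i) 1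
    · intro c hc hSc
      rw [mem_MM] at hc
      have h1 : ∑ b ∈ c, H i b = 0 := by
        rw [← mulVec_vec, hc.prop.1]; rfl
      rw [← Finset.sum_sdiff hSc.1] at h1
      have h2 : ∑ b ∈ c \ S, H i b ≠ 0 := by
        intro h2
        rw [h2, zero_add] at h1
        exact hi h1
      obtain ⟨b, hb, hb'⟩ := Finset.exists_ne_zero_of_sum_ne_zero h2
      rw [Finset.mem_sdiff] at hb
      exact ⟨b, by simp [sup, hb', hb.2], hb.2, hb.1⟩

lemma sum_MM {rG rH n : ℕ} (G : Matrix (Fin rG) (Fin n) (ZMod 2))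
    (H : Matrix (Fin rH) (Fin n) (ZMod 2)) (m : ℕ) (hm : 2 ≤ m)
    (hrow : ∀ i, hammingNorm (H i) ≤ m) (q : ℝ) (hq : 0 ≤ q) (hx : ((m : ℝ) - 1) * q < 1) :
    ∑ c ∈ MM G H, q ^ c.card ≤
      n * ((((m : ℝ) - 1) * q) ^ (dCSS G H) / (1 - ((m : ℝ) - 1) * q)) := by
  set x := ((m : ℝ) - 1) * q with hxdef
  have hm1 : (1 : ℝ) ≤ (m : ℝ) - 1 := by
    have : (2 : ℝ) ≤ m := by exact_mod_cast hm
    linarith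
  have hx0 : 0 ≤ x := by positivity
  have hd : ∀ c ∈ MM G H, c.card ∈ Finset.Ico (dCSS G H) (n + 1) := by
    intro c hc
    rw [mem_MM] at hc
    rw [Finset.mem_Ico]
    refine ⟨Nat.sInf_le ⟨vec c, hc.prop.1, hc.prop.2, hamming_vec c⟩, ?_⟩
    have := Finset.card_le_univ c
    simp at this
    omega
  rw [← Finset.sum_fiberwise_of_maps_to hd]
  calc _ ≤ ∑ w ∈ Finset.Ico (dCSS G H) (n + 1), (n : ℝ) * x ^ w := by
        refine Finset.sum_le_sum fun w _ => ?_
        have h1 : ∑ c ∈ (MM G H).filter (fun c => c.card = w), q ^ c.card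
            = ((MM G H).filter (fun c => c.card = w)).card * q ^ w := by
          rw [Finset.sum_congr rfl (g := fun _ => q ^ w)]
          · simp
          · intro c hc
            rw [(Finset.mem_filter.1 hc).2]
        rw [h1]
        rcases w with _ | j
        · have : (MM G H).filter (fun c => c.card = 0) = ∅ := by
            refine Finset.filter_eq_empty_iff.2 ?_
            intro c hc h0
            rw [Finset.card_eq_zero] at h0
            subst h0
            exact MM_empty G H hc
          rw [this]
          simp
        · have h2 := count' (MM G H) (m - 1) (MM_branch G H m hrow) j
          have h3 : (((MM G H).filter (fun c => c.card = j + 1)).card : ℝ)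
              ≤ n * ((m : ℝ) - 1) ^ j := by
            have h4 : ((m - 1 : ℕ) : ℝ) = (m : ℝ) - 1 := by
              rw [Nat.cast_sub (by omega)]; simp
            rw [← h4]
            exact_mod_cast h2
          calc _ ≤ (n * ((m : ℝ) - 1) ^ j) * q ^ (j + 1) := by gcongr
            _ ≤ (n * ((m : ℝ) - 1) ^ (j + 1)) * q ^ (j + 1) := by
              gcongr
              omega
            _ = n * x ^ (j + 1) := by rw [hxdef, mul_pow]; ring
    _ = n * ∑ w ∈ Finset.Ico (dCSS G H) (n + 1), x ^ w := by rw [Finset.mul_sum]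
    _ ≤ _ := by
      gcongr
      exact geom_sum_Ico_le_of_lt_one hx0 hx

/-- Boltzmann weight. -/
noncomputable def wt {n : ℕ} (K : ℝ) (e v : Fin n → ZMod 2) : ℝ :=
  Real.exp (K * ∑ b : Fin n, (-1 : ℝ) ^ ((e b).val + (v b).val))

lemma wt_split {n : ℕ} (K : ℝ) (e v : Fin n → ZMod 2) (c : Finset (Fin n)) (hc : c ⊆ sup v) :
    wt K e v = wt K e (v + vec c) * ∏ b ∈ c, Real.exp (-(2 * K) * (-1) ^ (e b).val) := by
  rw [← Real.exp_sum, wt, wt, ← Real.exp_add]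
  congr 1
  have h1 : ∑ b ∈ c, -(2 * K) * (-1 : ℝ) ^ (e b).val
      = K * ∑ b, (if b ∈ c then -2 * (-1 : ℝ) ^ (e b).val else 0) := by
    rw [Finset.sum_ite_mem, Finset.univ_inter, Finset.mul_sum]
    exact Finset.sum_congr rfl fun b _ => by ring
  rw [h1, ← mul_add, ← Finset.sum_add_distrib]
  congr 1
  refine Finset.sum_congr rfl fun b _ => ?_
  by_cases hb : b ∈ c
  · have h2 : v b = 1 := zmod2 _ (by simpa [sup] using hc hb)
    have h3 : (1 + 1 : ZMod 2) = 0 := by decide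
    have h4 : (1 : ZMod 2).val = 1 := by decide
    simp only [Pi.add_apply, vec, hb, h2, if_true, h3, h4, ZMod.val_zero]
    ring
  · simp [vec, hb]

lemma sum_prod_univ {n : ℕ} (f : Fin n → ZMod 2 → ℝ) :
    ∑ e : Fin n → ZMod 2, ∏ b, f b (e b) = ∏ b, ∑ a, f b a := by
  rw [Finset.prod_univ_sum, Fintype.piFinset_univ]

lemma davg_prod {n : ℕ} (K p : ℝ) (c : Finset (Fin n)) :
    davg p (fun e => ∏ b ∈ c, Real.exp (-(2 * K) * (-1) ^ (e b).val)) =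
      (Real.exp (-(2 * K)) * (1 - p) + Real.exp (2 * K) * p) ^ c.card := by
  have h1 : ∀ e : Fin n → ZMod 2, p ^ hammingNorm e * (1 - p) ^ (n - hammingNorm e) *
      ∏ b ∈ c, Real.exp (-(2 * K) * (-1) ^ (e b).val) =
      ∏ b, (fun (b : Fin n) (a : ZMod 2) => (if a ≠ 0 then p else 1 - p) *
        (if b ∈ c then Real.exp (-(2 * K) * (-1) ^ a.val) else 1)) b (e b) := by
    intro e
    rw [Finset.prod_mul_distrib, Finset.prod_ite_mem, Finset.univ_inter, Finset.prod_ite,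
      Finset.prod_const, Finset.prod_const]
    congr 3
    have := Finset.card_filter_add_card_filter_not (s := (Finset.univ : Finset (Fin n))) (fun b => e b ≠ 0)
    simp only [Finset.card_univ, Fintype.card_fin] at this
    rw [hammingNorm]
    omega
  unfold davg
  rw [Finset.sum_congr rfl fun e _ => h1 e]
  refine (sum_prod_univ (fun (b : Fin n) (a : ZMod 2) => (if a ≠ 0 then p else 1 - p) *
        (if b ∈ c then Real.exp (-(2 * K) * (-1) ^ a.val) else 1))).trans ?_
  have h2 : ∀ b : Fin n, ∑ a : ZMod 2, (fun (b : Fin n) (a : ZMod 2) => (if a ≠ 0 then p else 1 - p) *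
        (if b ∈ c then Real.exp (-(2 * K) * (-1) ^ a.val) else 1)) b a =
      if b ∈ c then (Real.exp (-(2 * K)) * (1 - p) + Real.exp (2 * K) * p) else 1 := by
    intro b
    have hu : (Finset.univ : Finset (ZMod 2)) = {0, 1} := by decide
    have h4 : (1 : ZMod 2).val = 1 := by decide
    rw [hu, Finset.sum_pair (by decide)]
    by_cases hb : b ∈ c
    · simp [hb, h4]; ring
    · simp [hb]
  rw [Finset.prod_congr rfl fun b _ => h2 b, Finset.prod_ite_mem, Finset.univ_inter,
    Finset.prod_const]

lemma davg_mono {n : ℕ} {p : ℝ} (hp0 : 0 ≤ p) (hp1 : p ≤ 1) {X Y : (Fin n → ZMod 2) → ℝ}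
    (h : ∀ e, X e ≤ Y e) : davg p X ≤ davg p Y := by
  refine Finset.sum_le_sum fun e _ => ?_
  have : 0 ≤ 1 - p := by linarith
  have := h e
  gcongr

lemma davg_one {n : ℕ} (p : ℝ) : davg p (fun _ : Fin n → ZMod 2 => (1 : ℝ)) = 1 := by
  simpa using davg_prod (n := n) 0 p ∅

/-- A word in the row space of `G` only has zero logical component. -/
lemma logical {rG rH k n : ℕ} (G : Matrix (Fin rG) (Fin n) (ZMod 2))
    (H : Matrix (Fin rH) (Fin n) (ZMod 2)) (hGH : G * Hᵀ = 0)
    (hk : k = n - G.rank - H.rank)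
    (Hs : Matrix (Fin rG ⊕ Fin k) (Fin n) (ZMod 2)) (hHs : IsAdaptedDual G H Hs)
    (β : Fin rG → ZMod 2) (γ : Fin k → ZMod 2)
    (h : ∃ α, Matrix.vecMul α G = Matrix.vecMul (Sum.elim β γ) Hs) : γ = 0 := by
  obtain ⟨hG, hr⟩ := hHs
  have hinl : ∀ β : Fin rG → ZMod 2, Matrix.vecMul (Sum.elim β (0 : Fin k → ZMod 2)) Hs
      = Matrix.vecMul β G := by
    intro β
    funext b
    simp [Matrix.vecMul, dotProduct, hG]
  have hle : LinearMap.range G.vecMulLinear ≤ LinearMap.ker H.mulVecLin := by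
    rw [← hr]
    rintro _ ⟨β, rfl⟩
    exact ⟨Sum.elim β 0, hinl β⟩
  have hrG : Module.finrank (ZMod 2) (LinearMap.range G.vecMulLinear) = G.rank := by
    rw [← Matrix.rank_transpose, Matrix.rank, Matrix.mulVecLin_transpose]
  have hrH : Module.finrank (ZMod 2) (LinearMap.range H.mulVecLin) = H.rank := rfl
  have e1 := LinearMap.finrank_range_add_finrank_ker H.mulVecLin
  have e2 := LinearMap.finrank_range_add_finrank_ker G.vecMulLinear
  have e3 := LinearMap.finrank_range_add_finrank_ker Hs.vecMulLinear
  have e4 := Submodule.finrank_mono hle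
  simp only [Module.finrank_fintype_fun_eq_card, Fintype.card_fin, Fintype.card_sum] at e1 e2 e3
  rw [hr] at e3
  -- the embedding of the kernel
  let ι : (Fin rG → ZMod 2) →ₗ[ZMod 2] (Fin rG ⊕ Fin k → ZMod 2) :=
    { toFun := fun β => Sum.elim β 0
      map_add' := by
        intro x y; funext i; rcases i with i | i <;> simp
      map_smul' := by
        intro x y; funext i; rcases i with i | i <;> simp }
  have hι : Function.Injective ι := by
    intro x y hxy
    funext i
    exact congrFun hxy (Sum.inl i)
  have e5 : Module.finrank (ZMod 2) ((LinearMap.ker G.vecMulLinear).map ι) =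
      Module.finrank (ZMod 2) (LinearMap.ker G.vecMulLinear) :=
    (Submodule.equivMapOfInjective ι hι _).finrank_eq.symm
  have hle2 : (LinearMap.ker G.vecMulLinear).map ι ≤ LinearMap.ker Hs.vecMulLinear := by
    rintro _ ⟨x, hx, rfl⟩
    have hx' : Matrix.vecMul x G = 0 := hx
    change Matrix.vecMul (Sum.elim x 0) Hs = 0
    rw [hinl, hx']
  have heq : (LinearMap.ker G.vecMulLinear).map ι = LinearMap.ker Hs.vecMulLinear :=
    Submodule.eq_of_le_of_finrank_eq hle2 (by omega)
  obtain ⟨α, hα⟩ := h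
  have hmem : Sum.elim β γ - Sum.elim α 0 ∈ LinearMap.ker Hs.vecMulLinear := by
    change Matrix.vecMul (Sum.elim β γ - Sum.elim α 0) Hs = 0
    rw [Matrix.sub_vecMul, hinl, hα, sub_self]
  rw [← heq] at hmem
  obtain ⟨x, _, hx⟩ := hmem
  funext i
  have := congrFun hx (Sum.inr i)
  simpa [ι] using this.symm

lemma Zf_eq {ρ : Type*} [Fintype ρ] [DecidableEq ρ] {n : ℕ}
    (G : Matrix ρ (Fin n) (ZMod 2)) (e : Fin n → ZMod 2) (K : ℝ) :
    Zf G e K = ∑ α : ρ → ZMod 2, wt K e (Matrix.vecMul α G) := rfl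

lemma Zf_pos {ρ : Type*} [Fintype ρ] [DecidableEq ρ] {n : ℕ}
    (G : Matrix ρ (Fin n) (ZMod 2)) (e : Fin n → ZMod 2) (K : ℝ) : 0 < Zf G e K :=
  Finset.sum_pos (fun _ _ => Real.exp_pos _) Finset.univ_nonempty

lemma Zf_bounds {rG rH k n : ℕ} (G : Matrix (Fin rG) (Fin n) (ZMod 2))
    (H : Matrix (Fin rH) (Fin n) (ZMod 2)) (hGH : G * Hᵀ = 0)
    (hk : k = n - G.rank - H.rank)
    (Hs : Matrix (Fin rG ⊕ Fin k) (Fin n) (ZMod 2)) (hHs : IsAdaptedDual G H Hs)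
    (K : ℝ) (e : Fin n → ZMod 2) :
    Zf G e K ≤ Zf Hs e K ∧ Zf Hs e K ≤ Zf G e K + Zf Hs e K *
      ∑ c ∈ MM G H, ∏ b ∈ c, Real.exp (-(2 * K) * (-1) ^ (e b).val) := by
  have hinl : ∀ β : Fin rG → ZMod 2, Matrix.vecMul (Sum.elim β (0 : Fin k → ZMod 2)) Hs
      = Matrix.vecMul β G := by
    intro β
    funext b
    simp [Matrix.vecMul, dotProduct, hHs.1]
  have hwt : ∀ v, 0 < wt K e v := fun v => Real.exp_pos _
  have hZ : Zf G e K = ∑ α ∈ Finset.univ.filter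
      (fun α : Fin rG ⊕ Fin k → ZMod 2 => ∀ i, α (Sum.inr i) = 0),
      wt K e (Matrix.vecMul α Hs) := by
    rw [Zf_eq]
    refine Finset.sum_bij (fun β _ => Sum.elim β 0) ?_ ?_ ?_ ?_
    · intro β _; simp
    · intro x _ y _ hxy
      funext i
      exact congrFun hxy (Sum.inl i)
    · intro α hα
      refine ⟨fun i => α (Sum.inl i), Finset.mem_univ _, ?_⟩
      funext i
      rcases i with i | i
      · rfl
      · simpa using ((Finset.mem_filter.1 hα).2 i).symm
    · intro β _
      rw [hinl]
  have hsplit := Finset.sum_filter_add_sum_filter_not (Finset.univ)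
    (fun α : Fin rG ⊕ Fin k → ZMod 2 => ∀ i, α (Sum.inr i) = 0)
    (fun α => wt K e (Matrix.vecMul α Hs))
  rw [← hZ, ← Zf_eq] at hsplit
  refine ⟨?_, ?_⟩
  · rw [← hsplit]
    exact le_add_of_nonneg_right (Finset.sum_nonneg fun _ _ => (hwt _).le)
  rw [← hsplit]
  rw [hsplit]
  conv_lhs => rw [← hsplit]
  gcongr
  calc _ ≤ ∑ α ∈ Finset.univ.filter
        (fun α : Fin rG ⊕ Fin k → ZMod 2 => ¬ ∀ i, α (Sum.inr i) = 0),
        ∑ c ∈ MM G H, (if c ⊆ sup (Matrix.vecMul α Hs) then wt K e (Matrix.vecMul α Hs) else 0) := by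
        refine Finset.sum_le_sum fun α hα => ?_
        have hα' := (Finset.mem_filter.1 hα).2
        have hNT : NT G H (sup (Matrix.vecMul α Hs)) := by
          rw [NT, vec_sup]
          constructor
          · have : Hs.vecMulLinear α ∈ LinearMap.ker H.mulVecLin := by
              rw [← hHs.2]; exact ⟨α, rfl⟩
            exact this
          · intro hh
            apply hα'
            have he : Sum.elim (fun i => α (Sum.inl i)) (fun i => α (Sum.inr i)) = α := by
              funext i; rcases i with i | i <;> rfl
            have := logical G H hGH hk Hs hHs (fun i => α (Sum.inl i)) (fun i => α (Sum.inr i))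
              (by rw [he]; exact hh)
            exact fun i => congrFun this i
        obtain ⟨c, hcle, hc⟩ := exists_minimal_le_of_wellFoundedLT (NT G H) _ hNT
        have hcs : c ⊆ sup (Matrix.vecMul α Hs) := hcle
        refine le_trans ?_ (Finset.single_le_sum
          (f := fun c => if c ⊆ sup (Matrix.vecMul α Hs) then wt K e (Matrix.vecMul α Hs) else 0)
          (fun c _ => ?_) (mem_MM.2 hc))
        · simp [hcs]
        · split_ifs
          · exact (hwt _).le
          · exact le_rfl
    _ ≤ ∑ α : Fin rG ⊕ Fin k → ZMod 2,
        ∑ c ∈ MM G H, (if c ⊆ sup (Matrix.vecMul α Hs) then wt K e (Matrix.vecMul α Hs) else 0) := by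
        refine Finset.sum_le_sum_of_subset_of_nonneg (Finset.filter_subset _ _) fun α _ _ => ?_
        refine Finset.sum_nonneg fun c _ => ?_
        split_ifs
        · exact (hwt _).le
        · exact le_rfl
    _ = ∑ c ∈ MM G H, ∑ α : Fin rG ⊕ Fin k → ZMod 2,
        (if c ⊆ sup (Matrix.vecMul α Hs) then wt K e (Matrix.vecMul α Hs) else 0) :=
        Finset.sum_comm
    _ ≤ ∑ c ∈ MM G H, Zf Hs e K * ∏ b ∈ c, Real.exp (-(2 * K) * (-1) ^ (e b).val) := by
        refine Finset.sum_le_sum fun c hc => ?_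
        rw [mem_MM] at hc
        obtain ⟨α0, hα0⟩ : vec c ∈ LinearMap.range Hs.vecMulLinear := by
          rw [hHs.2]; exact hc.prop.1
        have hα0' : Matrix.vecMul α0 Hs = vec c := hα0
        have hsh : Zf Hs e K = ∑ α, wt K e (Matrix.vecMul α Hs + vec c) := by
          rw [Zf_eq, ← Equiv.sum_comp (Equiv.addRight α0)]
          refine Finset.sum_congr rfl fun α _ => ?_
          rw [Equiv.coe_addRight, Matrix.add_vecMul, hα0']
        rw [hsh, Finset.sum_mul]
        refine Finset.sum_le_sum fun α _ => ?_
        split_ifs with hcs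
        · rw [← wt_split K e _ c hcs]
        · exact mul_nonneg (hwt _).le (Finset.prod_nonneg fun _ _ => (Real.exp_pos _).le)
    _ = _ := by rw [Finset.mul_sum]

lemma Psucc_bounds {rG rH k n : ℕ} (G : Matrix (Fin rG) (Fin n) (ZMod 2))
    (H : Matrix (Fin rH) (Fin n) (ZMod 2)) (hGH : G * Hᵀ = 0)
    (hk : k = n - G.rank - H.rank)
    (Hs : Matrix (Fin rG ⊕ Fin k) (Fin n) (ZMod 2)) (hHs : IsAdaptedDual G H Hs)
    (K p : ℝ) (hp0 : 0 ≤ p) (hp1 : p ≤ 1) :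
    Psucc G Hs K p ≤ 1 ∧ 1 - ∑ c ∈ MM G H,
      (Real.exp (-(2 * K)) * (1 - p) + Real.exp (2 * K) * p) ^ c.card ≤ Psucc G Hs K p := by
  constructor
  · rw [← davg_one (n := n) p]
    refine davg_mono hp0 hp1 fun e => ?_
    exact (div_le_one (Zf_pos Hs e K)).2 (Zf_bounds G H hGH hk Hs hHs K e).1
  · have h1 : davg p (fun e : Fin n → ZMod 2 => 1 - ∑ c ∈ MM G H,
        ∏ b ∈ c, Real.exp (-(2 * K) * (-1) ^ (e b).val)) =
        1 - ∑ c ∈ MM G H,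
      (Real.exp (-(2 * K)) * (1 - p) + Real.exp (2 * K) * p) ^ c.card := by
      have h0 := davg_one (n := n) p
      rw [Finset.sum_congr rfl fun c _ => (davg_prod K p c).symm]
      refine Eq.trans ?_ (congrArg (fun z => z - ∑ c ∈ MM G H, davg p (fun e : Fin n → ZMod 2 =>
        ∏ b ∈ c, Real.exp (-(2 * K) * (-1) ^ (e b).val))) h0)
      simp only [davg]
      rw [Finset.sum_comm, ← Finset.sum_sub_distrib]
      refine Finset.sum_congr rfl fun e _ => ?_
      rw [← Finset.mul_sum, mul_sub]
    rw [← h1]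
    refine davg_mono hp0 hp1 fun e => ?_
    have h2 := (Zf_bounds G H hGH hk Hs hHs K e).2
    rw [le_div_iff₀ (Zf_pos Hs e K)]
    linarith

end CSSAux

/-- In the region `(m−1)[e^{−2K}(1−p) + e^{2K}p] < e^{−1/D}`, the point `(p,K)` is
decodable: the ML-decoding success probabilities converge to one. -/
theorem stmt13 (rG rH kk nn : ℕ → ℕ)
    (G : ∀ t, Matrix (Fin (rG t)) (Fin (nn t)) (ZMod 2))
    (H : ∀ t, Matrix (Fin (rH t)) (Fin (nn t)) (ZMod 2))
    (hGH : ∀ t, G t * (H t)ᵀ = 0)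
    (hk : ∀ t, kk t = nn t - (G t).rank - (H t).rank)
    (Hs : ∀ t, Matrix (Fin (rG t) ⊕ Fin (kk t)) (Fin (nn t)) (ZMod 2))
    (hHs : ∀ t, IsAdaptedDual (G t) (H t) (Hs t))
    (hmono : StrictMono nn)
    (m : ℕ) (hm : 2 ≤ m)
    (hrowG : ∀ t i, hammingNorm (G t i) ≤ m)
    (hrowH : ∀ t i, hammingNorm (H t i) ≤ m)
    (D : ℝ) (hD : 0 < D)
    (hdist : ∀ t, D * Real.log (nn t) ≤
      (min (dCSS (G t) (H t)) (dCSS (H t) (G t)) : ℝ))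
    (K p : ℝ) (hK : 0 < K) (hp0 : 0 ≤ p) (hp1 : p ≤ 1)
    (hregion : ((m : ℝ) - 1) * (Real.exp (-(2 * K)) * (1 - p) + Real.exp (2 * K) * p) <
      Real.exp (-1 / D)) :
    Tendsto (fun t => Psucc (G t) (Hs t) K p) atTop (nhds 1) := by
  set q := Real.exp (-(2 * K)) * (1 - p) + Real.exp (2 * K) * p with hqdef
  have hp1' : 0 ≤ 1 - p := by linarith
  have hq : 0 < q := by
    have h1 : 0 < Real.exp (-(2 * K)) := Real.exp_pos _
    have h2 : Real.exp (-(2 * K)) ≤ Real.exp (2 * K) := Real.exp_le_exp.2 (by linarith)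
    nlinarith
  have hm1 : (1 : ℝ) ≤ (m : ℝ) - 1 := by
    have : (2 : ℝ) ≤ m := by exact_mod_cast hm
    linarith
  set x := ((m : ℝ) - 1) * q with hxdef
  have hx0 : 0 < x := by positivity
  have hx1 : x < 1 := by
    refine hregion.trans ?_
    rw [Real.exp_lt_one_iff]
    exact div_neg_of_neg_of_pos (by norm_num) hD
  have hlog : 1 + D * Real.log x < 0 := by
    have h1 : Real.log x < -1 / D := (Real.log_lt_iff_lt_exp hx0).2 hregion
    rw [lt_div_iff₀ hD] at h1
    linarith
  have hbound : ∀ t, 1 ≤ nn t →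
      1 - ((nn t : ℝ) ^ (1 + D * Real.log x)) / (1 - x) ≤ Psucc (G t) (Hs t) K p := by
    intro t ht
    refine le_trans ?_ (CSSAux.Psucc_bounds (G t) (H t) (hGH t) (hk t) (Hs t) (hHs t) K p hp0 hp1).2
    have h1 := CSSAux.sum_MM (G t) (H t) m hm (hrowH t) q hq.le hx1
    have hn : (0 : ℝ) < nn t := by exact_mod_cast ht
    have h2 : x ^ (dCSS (G t) (H t)) ≤ (nn t : ℝ) ^ (D * Real.log x) := by
      have h3 : D * Real.log (nn t) ≤ (dCSS (G t) (H t) : ℝ) := (hdist t).trans (min_le_left _ _)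
      calc x ^ (dCSS (G t) (H t)) = x ^ ((dCSS (G t) (H t) : ℕ) : ℝ) := (Real.rpow_natCast _ _).symm
        _ ≤ x ^ (D * Real.log (nn t)) := Real.rpow_le_rpow_of_exponent_ge hx0 hx1.le h3
        _ = _ := by
          rw [Real.rpow_def_of_pos hx0, Real.rpow_def_of_pos hn]
          congr 1; ring
    have h4 : (nn t : ℝ) * (x ^ (dCSS (G t) (H t)) / (1 - x)) ≤
        ((nn t : ℝ) ^ (1 + D * Real.log x)) / (1 - x) := by
      rw [Real.rpow_add hn, Real.rpow_one, ← mul_div_assoc]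
      have : 0 < 1 - x := by linarith
      gcongr
    linarith
  have hlim : Tendsto (fun t => 1 - ((nn t : ℝ) ^ (1 + D * Real.log x)) / (1 - x)) atTop (nhds 1) := by
    have h1 : Tendsto (fun t => (nn t : ℝ)) atTop atTop :=
      tendsto_natCast_atTop_atTop.comp hmono.tendsto_atTop
    have h2 := (tendsto_rpow_neg_atTop (y := -(1 + D * Real.log x)) (by linarith)).comp h1
    simp only [neg_neg] at h2
    simpa [Function.comp_def] using (h2.div_const (1 - x)).const_sub 1
  refine tendsto_of_tendsto_of_tendsto_of_le_of_le' hlim tendsto_const_nhds ?_ ?_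
  · filter_upwards [hmono.tendsto_atTop.eventually_ge_atTop 1] with t ht
    exact hbound t ht
  · exact Eventually.of_forall fun t =>
      (CSSAux.Psucc_bounds (G t) (H t) (hGH t) (hk t) (Hs t) (hHs t) K p hp0 hp1).1
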